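/- Let φ : A → B be a homomorphism of commutative rings, let S ⊆ A be a multiplicatively closed set generated by a subset G ⊆ S, and suppose that every element of S is a nonzerodivisor in A and every element of φ(S) is a nonzerodivisor in B. If the induced map A/g → B/φ(g) is an isomorphism for every g ∈ G, then φ is an analytic isomorphism along S. -/

import Mathlib

/-- For a ring homomorphism `φ : A → B` and `f ∈ A`, the induced homomorphism
`A/(f) → B/(φ f)` on quotients. -/
def inducedQuotMap {A B : Type*} [CommRing A] [CommRing B] (φ : A →+* B) (f : A) :
    A ⧸ Ideal.span {f} →+* B ⧸ Ideal.span {φ f} :=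
  Ideal.quotientMap (Ideal.span {φ f}) φ
    (by rw [← Ideal.map_le_iff_le_comap, Ideal.map_span, Set.image_singleton])

/-- The induced homomorphism `φ_S : A_S → B_{φ(S)}` on localizations. -/
noncomputable def inducedLocMap {A B : Type*} [CommRing A] [CommRing B]
    (φ : A →+* B) (S : Submonoid A) :
    Localization S →+* Localization (S.map φ) :=
  IsLocalization.map (Localization (S.map φ)) φ (Submonoid.le_comap_map S)

/-- `φ : A → B` is an analytic isomorphism along the multiplicative set `S ⊆ A` if the induced
maps `A/s → B/φ(s)` are isomorphisms for all `s ∈ S` and the square formed by `φ`, the two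
localization maps, and `φ_S : A_S → B_{φ(S)}` is a pullback square of commutative rings. -/
def IsAnalyticIsoAlong {A B : Type*} [CommRing A] [CommRing B]
    (φ : A →+* B) (S : Submonoid A) : Prop :=
  (∀ s ∈ S, Function.Bijective (inducedQuotMap φ s)) ∧
  ∀ (a : Localization S) (b : B),
    inducedLocMap φ S a = algebraMap B (Localization (S.map φ)) b →
    ∃! x : A, algebraMap A (Localization S) x = a ∧ φ x = b

/-!
For regular `φ f`, the conditions `φ f ∣ φ x → f ∣ x` and "every `b : B` is congruent to some `φ a`
modulo `φ f`" pass from `f` and `g` to `f * g`, so `A/s → B/φ(s)` is bijective for every product `s`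
of generators. If the fraction `x / s` and `b : B` agree in `B_{φ(S)}`, then `φ x = φ s * b` since
`φ(S)` is regular; injectivity of `A/s → B/φ(s)` gives `x = s * y`, and `y` is the required element
of `A`, unique because `A` embeds in `A_S`.
-/

section

variable {A B : Type*} [CommRing A] [CommRing B] {φ : A →+* B}

theorem inducedQuotMap_injective_iff {f : A} :
    Function.Injective (inducedQuotMap φ f) ↔ ∀ x, φ f ∣ φ x → f ∣ x := by
  simp only [injective_iff_map_eq_zero, Ideal.Quotient.mk_surjective.forall, inducedQuotMap,
    Ideal.quotientMap_mk, Ideal.Quotient.eq_zero_iff_dvd]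

theorem inducedQuotMap_surjective_iff {f : A} :
    Function.Surjective (inducedQuotMap φ f) ↔ ∀ b, ∃ a, φ f ∣ φ a - b := by
  simp only [Function.Surjective, Ideal.Quotient.mk_surjective.forall,
    Ideal.Quotient.mk_surjective.exists, inducedQuotMap, Ideal.quotientMap_mk,
    Ideal.Quotient.mk_eq_mk_iff_sub_mem, Ideal.mem_span_singleton]

theorem inducedQuotMap_one_bijective : Function.Bijective (inducedQuotMap φ 1) :=
  ⟨inducedQuotMap_injective_iff.2 fun x _ => one_dvd x,
    inducedQuotMap_surjective_iff.2 fun b => ⟨0, by rw [map_one]; exact one_dvd _⟩⟩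

theorem inducedQuotMap_mul_injective {f g : A} (hφf : φ f ∈ nonZeroDivisors B)
    (hf : Function.Injective (inducedQuotMap φ f))
    (hg : Function.Injective (inducedQuotMap φ g)) :
    Function.Injective (inducedQuotMap φ (f * g)) := by
  rw [inducedQuotMap_injective_iff] at hf hg ⊢
  rintro x ⟨c, hc⟩
  rw [map_mul, mul_assoc] at hc
  obtain ⟨y, rfl⟩ := hf x ⟨φ g * c, hc⟩
  rw [map_mul, mul_cancel_left_mem_nonZeroDivisors hφf] at hc
  exact mul_dvd_mul_left f (hg y ⟨c, hc⟩)

theorem inducedQuotMap_mul_surjective {f g : A}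
    (hf : Function.Surjective (inducedQuotMap φ f))
    (hg : Function.Surjective (inducedQuotMap φ g)) :
    Function.Surjective (inducedQuotMap φ (f * g)) := by
  rw [inducedQuotMap_surjective_iff] at hf hg ⊢
  intro b
  obtain ⟨a, c, hc⟩ := hf b
  obtain ⟨a', d, hd⟩ := hg c
  have hsub : φ (a - f * a') - b = φ (f * g) * -d := by
    simp only [map_sub, map_mul]
    linear_combination hc - φ f * hd
  exact ⟨a - f * a', -d, hsub⟩

theorem inducedQuotMap_bijective_of_mem_closure {G : Set A}
    (hφG : ∀ g ∈ G, φ g ∈ nonZeroDivisors B)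
    (hG : ∀ g ∈ G, Function.Bijective (inducedQuotMap φ g)) {s : A}
    (hs : s ∈ Submonoid.closure G) : Function.Bijective (inducedQuotMap φ s) := by
  induction hs using Submonoid.closure_induction_left with
  | one => exact inducedQuotMap_one_bijective
  | mul_left g hg t _ ht =>
    exact ⟨inducedQuotMap_mul_injective (hφG g hg) (hG g hg).1 ht.1,
      inducedQuotMap_mul_surjective (hG g hg).2 ht.2⟩

variable {A' B' : Type*} [CommRing A'] [CommRing B'] [Algebra A A'] [Algebra B B']
  {S : Submonoid A} {T : Submonoid B} [IsLocalization S A'] [IsLocalization T B']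

theorem exists_algebraMap_eq_and_map_eq (hT : T ≤ nonZeroDivisors B) (hST : S ≤ T.comap φ)
    (hinj : ∀ s ∈ S, Function.Injective (inducedQuotMap φ s)) {a : A'} {b : B}
    (hab : IsLocalization.map B' φ hST a = algebraMap B B' b) :
    ∃ y : A, algebraMap A A' y = a ∧ φ y = b := by
  obtain ⟨x, s, rfl⟩ := IsLocalization.exists_mk'_eq S a
  have hx : φ x = φ s * b := by
    rw [IsLocalization.map_mk', IsLocalization.mk'_eq_iff_eq_mul, ← map_mul] at hab
    rw [IsLocalization.injective B' hT hab, mul_comm]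
  obtain ⟨y, rfl⟩ := inducedQuotMap_injective_iff.1 (hinj s s.2) x ⟨b, hx⟩
  rw [map_mul, mul_cancel_left_mem_nonZeroDivisors (hT (hST s.2))] at hx
  exact ⟨y, (IsLocalization.mk'_mul_cancel_left y s).symm, hx⟩

theorem existsUnique_algebraMap_eq_and_map_eq (hS : S ≤ nonZeroDivisors A)
    (hT : T ≤ nonZeroDivisors B) (hST : S ≤ T.comap φ)
    (hinj : ∀ s ∈ S, Function.Injective (inducedQuotMap φ s)) {a : A'} {b : B}
    (hab : IsLocalization.map B' φ hST a = algebraMap B B' b) :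
    ∃! y : A, algebraMap A A' y = a ∧ φ y = b :=
  existsUnique_of_exists_of_unique (exists_algebraMap_eq_and_map_eq hT hST hinj hab)
    fun _ _ hy hz => IsLocalization.injective A' hS (hy.1.trans hz.1.symm)

end

/-- If a multiplicative set `S` is generated by `G`, all elements of `S` are nonzerodivisors in
`A`, all elements of `φ(S)` are nonzerodivisors in `B`, and `A/g → B/φ(g)` is an isomorphism
for every `g ∈ G`, then `φ` is an analytic isomorphism along `S`. -/
theorem stmt7 {A B : Type*} [CommRing A] [CommRing B] (φ : A →+* B)
    (S : Submonoid A) (G : Set A) (hgen : Submonoid.closure G = S)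
    (hS : ∀ s ∈ S, s ∈ nonZeroDivisors A)
    (hφS : ∀ s ∈ S, φ s ∈ nonZeroDivisors B)
    (hiso : ∀ g ∈ G, Function.Bijective (inducedQuotMap φ g)) :
    IsAnalyticIsoAlong φ S := by
  have hbij : ∀ s ∈ S, Function.Bijective (inducedQuotMap φ s) := by
    subst hgen
    exact fun s => inducedQuotMap_bijective_of_mem_closure
      (fun g hg => hφS g (Submonoid.subset_closure hg)) hiso
  have hmap : S.map φ ≤ nonZeroDivisors B := Submonoid.map_le_iff_le_comap.2 hφS
  exact ⟨hbij, fun _ _ hab =>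
    existsUnique_algebraMap_eq_and_map_eq hS hmap _ (fun s hs => (hbij s hs).1) hab⟩
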